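/- Let G be a 3-connected simple graph, let e be an edge of G, and let v be a vertex not incident to e. Then there exists a chordless cycle C in G − v containing e such that G − V(C) is connected. -/

import Mathlib

/-- `G` is `k`-connected: it has more than `k` vertices and remains connected
after deleting any set of fewer than `k` vertices. -/
def IsKConnected {V : Type*} [Fintype V] (G : SimpleGraph V) (k : ℕ) : Prop :=
  k < Fintype.card V ∧ ∀ s : Set V, s.ncard < k → (G.induce sᶜ).Connected

/-!
Let `e = xy` and `H = G - e`. Among the connected vertex sets `K ∋ v` for which `H - K` still
contains a path from `x` to `y`, take a maximal one, and let `T` be the set of vertices that lie on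
every such path. By maximality `T` contains every vertex outside `K` with a neighbour in `K`, so a
component `D` of `H - K - T` has all its neighbours in `T`. Following an `x`-`y` path to its first
neighbour `p` of `D`, crossing `D`, and leaving from the last neighbour `q` yields an `x`-`y` path
that misses every other neighbour of `D`; hence `D` has at most the two neighbours `p` and `q`,
which separate `D` from `v`, against 3-connectedness. So there is no such `D`: every vertex outside
`K` lies on every `x`-`y` path of `H - K`. Such a path is then chordless, and closing it up with `e`
gives a cycle with vertex set `V(G) ∖ K`.
-/

open SimpleGraph

theorem ncard_pair_le {α : Type*} (a b : α) : ({a, b} : Set α).ncard ≤ 2 :=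
  (Set.ncard_insert_le a {b}).trans (by rw [Set.ncard_singleton])

section JoinedAvoiding

variable {V : Type*} {G H : SimpleGraph V} {K L S D : Set V} {x y z t w : V}

/-- `x` and `y` lie in the same component of `G - K`. Stating this through walks of `G` avoids
passing to the subtype of vertices outside `K`. -/
def JoinedAvoiding (G : SimpleGraph V) (K : Set V) (x y : V) : Prop :=
  ∃ P : G.Walk x y, ∀ u ∈ P.support, u ∉ K

namespace JoinedAvoiding

theorem left_notMem (h : JoinedAvoiding G K x y) : x ∉ K :=
  let ⟨P, hP⟩ := h
  hP x P.start_mem_support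

theorem right_notMem (h : JoinedAvoiding G K x y) : y ∉ K :=
  let ⟨P, hP⟩ := h
  hP y P.end_mem_support

theorem refl (hx : x ∉ K) : JoinedAvoiding G K x x :=
  ⟨.nil, by simpa using hx⟩

theorem of_adj (hxy : G.Adj x y) (hx : x ∉ K) (hy : y ∉ K) : JoinedAvoiding G K x y :=
  ⟨hxy.toWalk, by simp [hx, hy]⟩

theorem symm (h : JoinedAvoiding G K x y) : JoinedAvoiding G K y x :=
  let ⟨P, hP⟩ := h
  ⟨P.reverse, by simpa using hP⟩

theorem trans (hxy : JoinedAvoiding G K x y) (hyz : JoinedAvoiding G K y z) :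
    JoinedAvoiding G K x z := by
  obtain ⟨P, hP⟩ := hxy
  obtain ⟨Q, hQ⟩ := hyz
  exact ⟨P.append Q, fun u hu => (P.mem_support_append_iff Q).1 hu |>.elim (hP u) (hQ u)⟩

theorem anti (h : JoinedAvoiding G L x y) (hKL : K ⊆ L) : JoinedAvoiding G K x y :=
  let ⟨P, hP⟩ := h
  ⟨P, fun u hu huK => hP u hu (hKL huK)⟩

theorem deleteEdge {e : Sym2 V} (h : JoinedAvoiding G K x y) (hze : z ∈ e) (hzK : z ∈ K) :
    JoinedAvoiding (G.deleteEdges {e}) K x y := by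
  obtain ⟨P, hP⟩ := h
  have heP : e ∉ P.edges := fun he => hP z (Walk.mem_support_of_mem_edges he hze) hzK
  exact ⟨P.toDeleteEdge e heP, by simpa using hP⟩

theorem exists_path (h : JoinedAvoiding G K x y) :
    ∃ P : G.Walk x y, P.IsPath ∧ ∀ u ∈ P.support, u ∉ K := by
  classical
  obtain ⟨P, hP⟩ := h
  exact ⟨P.bypass, P.bypass_isPath, fun u hu => hP u (P.support_bypass_subset_support hu)⟩

theorem exists_first_mem (h : JoinedAvoiding G K x t) (ht : t ∈ S) :
    ∃ p ∈ S, JoinedAvoiding G (K ∪ S \ {p}) x p := by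
  obtain ⟨P, hP⟩ := h
  induction P with
  | @nil x => exact ⟨x, ht, refl (by simpa using hP)⟩
  | @cons x x' t hadj P ih =>
    have hxK : x ∉ K := hP x (by simp)
    by_cases hxS : x ∈ S
    · exact ⟨x, hxS, refl (by simpa using hxK)⟩
    · obtain ⟨p, hpS, hp⟩ := ih ht fun u hu => hP u (by simp [hu])
      exact ⟨p, hpS, (of_adj hadj (by simp [hxK, hxS]) hp.left_notMem).trans hp⟩

end JoinedAvoiding

/-- The vertices `t` whose deletion from `H - K` separates `x` from `y`, including `x` and `y`
themselves. No member lies in `K` as soon as `H - K` joins `x` to `y`. -/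
def separators (H : SimpleGraph V) (K : Set V) (x y : V) : Set V :=
  {t | ¬ JoinedAvoiding H (insert t K) x y}

theorem left_mem_separators : x ∈ separators H K x y :=
  fun h => h.left_notMem (Set.mem_insert x K)

theorem right_mem_separators : y ∈ separators H K x y :=
  fun h => h.right_notMem (Set.mem_insert y K)

theorem mem_support_of_mem_separators (ht : t ∈ separators H K x y) (P : H.Walk x y)
    (hP : ∀ u ∈ P.support, u ∉ K) : t ∈ P.support := by
  by_contra htP
  refine ht ⟨P, fun u hu huK => ?_⟩
  rcases huK with rfl | huK
  exacts [htP hu, hP u hu huK]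

theorem joinedAvoiding_of_mem_separators (h : JoinedAvoiding H K x y)
    (ht : t ∈ separators H K x y) : JoinedAvoiding H K x t ∧ JoinedAvoiding H K t y := by
  classical
  obtain ⟨P, hP⟩ := h
  have htP := mem_support_of_mem_separators ht P hP
  exact ⟨⟨P.takeUntil t htP, fun u hu => hP u (P.support_takeUntil_subset_support htP hu)⟩,
    ⟨P.dropUntil t htP, fun u hu => hP u (P.support_dropUntil_subset_support htP hu)⟩⟩

/-- The vertices outside `D` that have a neighbour in `D`; deleting them cuts `D` off from the rest
of the graph. -/
def outerBoundary (G : SimpleGraph V) (D : Set V) : Set V :=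
  {t | t ∉ D ∧ ∃ d ∈ D, G.Adj d t}

theorem outerBoundary_deleteEdge {e : Sym2 V} (he : ∀ d ∈ D, d ∉ e) :
    outerBoundary (G.deleteEdges {e}) D = outerBoundary G D := by
  ext t
  refine and_congr_right fun _ => exists_congr fun d => and_congr_right fun hd => ?_
  have hne : s(d, t) ≠ e := fun h => he d hd (h ▸ Sym2.mem_mk_left d t)
  simp [hne]

theorem outerBoundary_setOf_joinedAvoiding_subset :
    outerBoundary H {u | JoinedAvoiding H L w u} ⊆ L := by
  rintro t ⟨htD, d, hd, hdt⟩
  by_contra htL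
  exact htD (hd.trans (.of_adj hdt hd.right_notMem htL))

theorem ncard_le_two_of_subset_separators (h : JoinedAvoiding H K x y)
    (hS : S ⊆ separators H K x y)
    (hcross : ∀ p ∈ S, ∀ q ∈ S, ∀ b ∈ S, b ≠ p → b ≠ q → JoinedAvoiding H (insert b K) p q) :
    S.ncard ≤ 2 := by
  obtain rfl | ⟨t, ht⟩ := S.eq_empty_or_nonempty
  · simp
  obtain ⟨hxt, hty⟩ := joinedAvoiding_of_mem_separators h (hS ht)
  obtain ⟨p, hpS, hxp⟩ := hxt.exists_first_mem ht
  obtain ⟨q, hqS, hyq⟩ := hty.symm.exists_first_mem ht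
  suffices S ⊆ {p, q} from (Set.ncard_le_ncard this).trans (ncard_pair_le p q)
  intro b hb
  by_contra! hbpq
  obtain ⟨hbp, hbq⟩ : b ≠ p ∧ b ≠ q := by simpa using hbpq
  have insert_subset (r) (hbr : b ≠ r) : insert b K ⊆ K ∪ S \ {r} :=
    Set.insert_subset (.inr ⟨hb, hbr⟩) Set.subset_union_left
  exact hS hb <| (hxp.anti (insert_subset p hbp)).trans <|
    (hcross p hpS q hqS b hb hbp hbq).trans (hyq.anti (insert_subset q hbq)).symm

theorem ncard_outerBoundary_le_two (h : JoinedAvoiding H K x y)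
    (hD : ∀ d ∈ D, ∀ d' ∈ D, JoinedAvoiding H (K ∪ separators H K x y) d d')
    (hS : outerBoundary H D ⊆ separators H K x y) : (outerBoundary H D).ncard ≤ 2 := by
  refine ncard_le_two_of_subset_separators h hS ?_
  intro p hp q hq b hb hbp hbq
  have avoid {r} (hr : r ∈ outerBoundary H D) (hbr : b ≠ r) : r ∉ insert b K := by
    rintro (rfl | hrK)
    exacts [hbr rfl, (joinedAvoiding_of_mem_separators h (hS hr)).1.right_notMem hrK]
  have hsub : insert b K ⊆ K ∪ separators H K x y :=
    Set.insert_subset (.inr (hS hb)) Set.subset_union_left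
  obtain ⟨d, hd, hdp⟩ := hp.2
  obtain ⟨d', hd', hdq⟩ := hq.2
  have hdd' := (hD d hd d' hd').anti hsub
  have hpd := (JoinedAvoiding.of_adj hdp hdd'.left_notMem (avoid hp hbp)).symm
  have hd'q := JoinedAvoiding.of_adj hdq hdd'.right_notMem (avoid hq hbq)
  exact hpd.trans (hdd'.trans hd'q)

end JoinedAvoiding

namespace IsKConnected

variable {V : Type*} [Fintype V] {G : SimpleGraph V} {k : ℕ} {s D : Set V} {a b v x y : V}

theorem joinedAvoiding (hG : IsKConnected G k) (hs : s.ncard < k) (ha : a ∉ s) (hb : b ∉ s) :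
    JoinedAvoiding G s a b := by
  obtain ⟨P⟩ := (hG.2 s hs).preconnected ⟨a, ha⟩ ⟨b, hb⟩
  refine ⟨P.map (Embedding.induce sᶜ).toHom, fun u hu => ?_⟩
  obtain ⟨u, -, rfl⟩ := List.mem_map.1 (P.support_map _ ▸ hu)
  exact u.2

theorem le_ncard_outerBoundary (hG : IsKConnected G k) (ha : a ∈ D) (hb : b ∉ D)
    (hbD : b ∉ outerBoundary G D) : k ≤ (outerBoundary G D).ncard := by
  by_contra! hlt
  obtain ⟨P, hP⟩ := hG.joinedAvoiding hlt (fun h => h.1 ha) hbD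
  obtain ⟨d, hdP, hfst, hsnd⟩ := P.exists_boundary_dart D ha hb
  exact hP d.snd (P.dart_snd_mem_support_of_mem_darts hdP) ⟨hsnd, d.fst, hfst, d.adj⟩

theorem joinedAvoiding_deleteEdge (hG : IsKConnected G 3) (hxy : x ≠ y) (hvx : v ≠ x)
    (hvy : v ≠ y) : JoinedAvoiding (G.deleteEdges {s(x, y)}) {v} x y := by
  classical
  obtain ⟨t, -, ht⟩ := Finset.exists_mem_notMem_of_card_lt_card
    (s := {v, x, y}) (t := .univ) (Finset.card_le_three.trans_lt hG.1)
  obtain ⟨htv, htx, hty⟩ : t ≠ v ∧ t ≠ x ∧ t ≠ y := by simpa using ht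
  have hxt : JoinedAvoiding G {y, v} x t :=
    hG.joinedAvoiding (Nat.lt_succ_of_le (ncard_pair_le y v)) (by simp [hxy, hvx.symm])
      (by simp [htv, hty])
  have hty : JoinedAvoiding G {x, v} t y :=
    hG.joinedAvoiding (Nat.lt_succ_of_le (ncard_pair_le x v)) (by simp [htv, htx])
      (by simp [hxy.symm, hvy.symm])
  exact ((hxt.deleteEdge (Sym2.mem_mk_right x y) (.inl rfl)).anti (by simp)).trans
    ((hty.deleteEdge (Sym2.mem_mk_left x y) (.inl rfl)).anti (by simp))

end IsKConnected

section Bypassed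

variable {V : Type*} {G : SimpleGraph V} {K : Set V} {v x y : V}

/-- `K` is a connected vertex set containing `v` such that `G - K` joins `x` to `y` without the
edge `xy`. The complement of a maximal such `K` is the vertex set of the cycle to be found. -/
structure IsBypassed (G : SimpleGraph V) (v x y : V) (K : Set V) : Prop where
  mem : v ∈ K
  connected : (G.induce K).Connected
  joined : JoinedAvoiding (G.deleteEdges {s(x, y)}) K x y

theorem outerBoundary_subset_separators_of_maximal (hK : Maximal (IsBypassed G v x y) K) :
    outerBoundary G K ⊆ separators (G.deleteEdges {s(x, y)}) K x y := by
  rintro z ⟨hzK, c, hc, hcz⟩ hjoined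
  have hconn : (G.induce (insert z K)).Connected := by
    rw [Set.insert_eq]
    exact connected_induce_union Preconnected.of_subsingleton hK.prop.connected.preconnected
      rfl hc hcz.symm
  exact hzK (hK.le_of_ge ⟨.inr hK.prop.mem, hconn, hjoined⟩ (Set.subset_insert z K)
    (Set.mem_insert z K))

theorem compl_subset_separators_of_maximal [Fintype V] (hG : IsKConnected G 3)
    (hK : Maximal (IsBypassed G v x y) K) :
    Kᶜ ⊆ separators (G.deleteEdges {s(x, y)}) K x y := by
  set H := G.deleteEdges {s(x, y)}
  set T := separators H K x y
  intro w hwK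
  by_contra hwT
  set D := {u | JoinedAvoiding H (K ∪ T) w u}
  have hDK {d} (hd : d ∈ D) : d ∉ K := fun h => hd.right_notMem (.inl h)
  have hDT {d} (hd : d ∈ D) : d ∉ T := fun h => hd.right_notMem (.inr h)
  have hHG : outerBoundary H D = outerBoundary G D := by
    refine outerBoundary_deleteEdge fun d hd hdxy => hDT hd ?_
    rcases Sym2.mem_iff.1 hdxy with rfl | rfl
    exacts [left_mem_separators, right_mem_separators]
  have hboundary : outerBoundary G D ⊆ T := by
    intro t ht
    obtain htK | htT := outerBoundary_setOf_joinedAvoiding_subset (hHG ▸ ht)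
    · obtain ⟨-, d, hd, hdt⟩ := ht
      have hdT := outerBoundary_subset_separators_of_maximal hK ⟨hDK hd, t, htK, hdt.symm⟩
      exact absurd hdT (hDT hd)
    · exact htT
  have hvT : v ∉ T := fun h =>
    (joinedAvoiding_of_mem_separators hK.prop.joined h).1.right_notMem hK.prop.mem
  have hle : (outerBoundary G D).ncard ≤ 2 :=
    hHG ▸ ncard_outerBoundary_le_two hK.prop.joined (fun _ hd _ hd' => hd.symm.trans hd')
      (hHG ▸ hboundary)
  have hge : 3 ≤ (outerBoundary G D).ncard :=
    hG.le_ncard_outerBoundary (JoinedAvoiding.refl (by simp [hwT, show w ∉ K from hwK]))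
      (fun h => hDK h hK.prop.mem) (fun h => hvT (hboundary h))
  omega

end Bypassed

section Chordless

variable {V : Type*} {G : SimpleGraph V} {x y : V}

theorem isChordless_of_forall_length_le (P : G.Walk x y)
    (hP : ∀ W : G.Walk x y, W.support ⊆ P.support → P.length ≤ W.length) : P.IsChordless := by
  have consecutive {i j} (hij : i < j) (hj : j ≤ P.length)
      (hadj : G.Adj (P.getVert i) (P.getVert j)) : j = i + 1 := by
    let W := (P.take i).append (.cons hadj (P.drop j))
    have hsub : W.support ⊆ P.support := by
      intro u hu
      simp only [W, Walk.mem_support_append_iff, Walk.support_cons, List.mem_cons] at hu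
      rcases hu with hu | rfl | hu
      exacts [(P.isSubwalk_take i).support_subset hu, P.getVert_mem_support i,
        (P.isSubwalk_drop j).support_subset hu]
    have hlen := hP W hsub
    simp only [W, Walk.length_append, Walk.length_cons, Walk.take_length, Walk.drop_length] at hlen
    omega
  have mem_edges {i j} (hij : i < j) (hj : j ≤ P.length)
      (hadj : G.Adj (P.getVert i) (P.getVert j)) : s(P.getVert i, P.getVert j) ∈ P.edges := by
    obtain rfl := consecutive hij hj hadj
    exact P.mk_mem_edges_iff_exists.2 ⟨i, hj, rfl⟩
  refine Walk.isChordless_iff_forall_mem_edges.2 fun a b ha hb hab => ?_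
  obtain ⟨i, rfl, hi⟩ := Walk.mem_support_iff_exists_getVert.1 ha
  obtain ⟨j, rfl, hj⟩ := Walk.mem_support_iff_exists_getVert.1 hb
  rcases lt_trichotomy i j with hij | rfl | hji
  · exact mem_edges hij hj hab
  · exact absurd rfl hab.ne
  · exact Sym2.eq_swap ▸ mem_edges hji hi hab.symm

theorem exists_chordless_cycle_of_path (hxy : G.Adj x y)
    {P : (G.deleteEdges {s(x, y)}).Walk x y} (hP : P.IsPath) (hchord : P.IsChordless) :
    ∃ C : G.Walk y y, C.IsCycle ∧ s(x, y) ∈ C.edges ∧ C.IsChordless ∧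
      ∀ u, u ∈ C.support ↔ u ∈ P.support := by
  have hle : G.deleteEdges {s(x, y)} ≤ G := deleteEdges_le _
  have hsupport (u : V) : u ∈ (Walk.cons hxy.symm (P.mapLe hle)).support ↔ u ∈ P.support := by
    rw [Walk.support_cons, Walk.support_mapLe_eq_support, List.mem_cons]
    exact or_iff_right_of_imp fun h => h ▸ P.end_mem_support
  refine ⟨.cons hxy.symm (P.mapLe hle), ?_, ?_, ?_, hsupport⟩
  · rw [Walk.cons_isCycle_iff, Walk.edges_mapLe_eq_edges]
    refine ⟨hP.mapLe hle, fun hmem => ?_⟩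
    have hadj := P.adj_of_mem_edges hmem
    simp at hadj
  · simp [Sym2.eq_swap]
  · refine Walk.isChordless_iff_forall_mem_edges.2 fun a b ha hb hab => ?_
    rw [Walk.edges_cons, Walk.edges_mapLe_eq_edges, List.mem_cons]
    refine or_iff_not_imp_left.2 fun hne => ?_
    refine hchord.mem_edges ((hsupport a).1 ha) ((hsupport b).1 hb) ?_
    exact deleteEdges_adj.2 ⟨hab, by rwa [Set.mem_singleton_iff, Sym2.eq_swap (a := x)]⟩

end Chordless

theorem exists_chordless_path_of_maximal {V : Type*} [Fintype V] {G : SimpleGraph V} {v x y : V}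
    {K : Set V} (hG : IsKConnected G 3) (hK : Maximal (IsBypassed G v x y) K) :
    ∃ P : (G.deleteEdges {s(x, y)}).Walk x y, P.IsPath ∧ P.IsChordless ∧
      ∀ u, u ∈ P.support ↔ u ∉ K := by
  have hcover (W : (G.deleteEdges {s(x, y)}).Walk x y) (hW : ∀ u ∈ W.support, u ∉ K) {u : V}
      (hu : u ∉ K) : u ∈ W.support :=
    mem_support_of_mem_separators (compl_subset_separators_of_maximal hG hK hu) W hW
  obtain ⟨P, hpath, hP⟩ := hK.prop.joined.exists_path
  refine ⟨P, hpath, isChordless_of_forall_length_le P fun W hWP => ?_,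
    fun u => ⟨hP u, hcover P hP⟩⟩
  have hPW : P.support ⊆ W.support := fun u hu => hcover W (fun t ht => hP t (hWP ht)) (hP u hu)
  simpa using (hpath.support_nodup.subperm hPW).length_le

/-- (Tutte) For every 3-connected graph `G`, edge `e` and vertex `v` not incident to
`e`, there is a chordless cycle `C` of `G` avoiding `v`, containing `e`, such that
`G - V(C)` is connected. -/
theorem stmt16 {V : Type*} [Fintype V] (G : SimpleGraph V)
    (hconn : IsKConnected G 3) (e : Sym2 V) (he : e ∈ G.edgeSet)
    (v : V) (hv : v ∉ e) :
    ∃ (a : V) (C : G.Walk a a), C.IsCycle ∧ v ∉ C.support ∧ e ∈ C.edges ∧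
      (∀ x ∈ C.support, ∀ y ∈ C.support, G.Adj x y → s(x, y) ∈ C.edges) ∧
      (G.induce {u : V | u ∉ C.support}).Connected := by
  induction e using Sym2.ind with | _ x y
  have hxy : G.Adj x y := he
  obtain ⟨hvx, hvy⟩ : v ≠ x ∧ v ≠ y := by simpa using hv
  have hsingleton : IsBypassed G v x y {v} :=
    ⟨rfl, .of_subsingleton, hconn.joinedAvoiding_deleteEdge hxy.ne hvx hvy⟩
  obtain ⟨K, hK⟩ := (Set.toFinite {K | IsBypassed G v x y K}).exists_maximal ⟨{v}, hsingleton⟩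
  obtain ⟨P, hpath, hchord, hP⟩ := exists_chordless_path_of_maximal hconn hK
  obtain ⟨C, hcycle, heC, hCchord, hCP⟩ := exists_chordless_cycle_of_path hxy hpath hchord
  have hC (u : V) : u ∈ C.support ↔ u ∉ K := (hCP u).trans (hP u)
  have hcompl : {u : V | u ∉ C.support} = K := by ext u; simp [hC]
  exact ⟨y, C, hcycle, fun h => (hC v).1 h hK.prop.mem, heC,
    fun _ ha _ hb => hCchord.mem_edges ha hb, hcompl ▸ hK.prop.connected⟩
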